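/- (q-Taylor coefficients) Let 0<q<1, a,c∈ℂ with a≠0, c≠0, n∈ℤ_{≥0}, and let f(x) := Σ_{k=0}^n c_k (qax/c;q)_k with c_0,…,c_n∈ℂ. Then for every k with 0≤k≤n, the k-fold backward q-derivative satisfies ((D_q^-)^k f)(c/(q^{k+1}a)) = c_k (-1)^k (qa/c)^k q^{k(k-1)/2} (q;q)_k/(1-q)^k. -/

import Mathlib

/-!
The backward q-derivative lowers the degree in the basis `(bx;q)_j` just as `d/dx` does in the
monomial basis: `D_q^- (bx;q)_j = -b [j]_q (bqx;q)_{j-1}` with `[j]_q = 1 + q + ⋯ + q^{j-1}`.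
Iterating, `(D_q^-)^k (bx;q)_j` is a multiple of `[j]_q [j-1]_q ⋯ [j-k+1]_q (b q^k x;q)_{j-k}`.
The first factor vanishes for `j < k`, and at the point where `b q^k x = 1` the second vanishes for
`j > k`. Only the term `j = k` survives there, and `[k]_q ⋯ [1]_q = (q;q)_k / (1-q)^k`.
-/

noncomputable section

/-- The finite q-shifted factorial `(a;q)_k`. -/
def qp (q a : ℂ) (k : ℕ) : ℂ := ∏ j ∈ Finset.range k, (1 - a * q ^ j)

/-- The backward q-derivative `(D_q^- f)(z) = (f(z)-f(qz))/((1-q)z)`. -/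
def DqM (q : ℝ) (f : ℂ → ℂ) (z : ℂ) : ℂ := (f z - f ((q : ℂ) * z)) / ((1 - (q : ℂ)) * z)

section CommRing

variable {R : Type*} [CommRing R]

/-- The q-shifted factorial `(a;q)_k` over a commutative ring; `qp` is the case of `ℂ`. -/
def qPochhammer (q a : R) (k : ℕ) : R := ∏ j ∈ Finset.range k, (1 - a * q ^ j)

/-- The q-descending factorial `[n]_q [n-1]_q ⋯ [n-k+1]_q`, where `[m]_q = ∑_{l<m} q^l`: the
constant that `k` q-derivatives extract from a q-shifted factorial of length `n`. As for
`Nat.descFactorial`, the truncated subtraction makes it vanish when `n < k`. -/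
def qDescFactorial (q : R) (n k : ℕ) : R :=
  ∏ i ∈ Finset.range k, ∑ l ∈ Finset.range (n - i), q ^ l

lemma qPochhammer_zero (q a : R) : qPochhammer q a 0 = 1 := Finset.prod_range_zero _

lemma qPochhammer_succ (q a : R) (k : ℕ) :
    qPochhammer q a (k + 1) = qPochhammer q a k * (1 - a * q ^ k) :=
  Finset.prod_range_succ _ _

lemma qPochhammer_succ' (q a : R) (k : ℕ) :
    qPochhammer q a (k + 1) = (1 - a) * qPochhammer q (q * a) k := by
  rw [qPochhammer, Finset.prod_range_succ', mul_comm, pow_zero, mul_one]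
  congr 1
  exact Finset.prod_congr rfl fun i _ => by ring

lemma qPochhammer_one_of_pos (q : R) {k : ℕ} (hk : 0 < k) : qPochhammer q 1 k = 0 :=
  Finset.prod_eq_zero (Finset.mem_range.2 hk) (by simp)

lemma qPochhammer_sub_qPochhammer_mul (q a : R) (m : ℕ) :
    qPochhammer q a m - qPochhammer q (q * a) m =
      -a * (1 - q ^ m) * qPochhammer q (q * a) (m - 1) := by
  cases m with
  | zero => simp [qPochhammer_zero]
  | succ m =>
    rw [qPochhammer_succ', qPochhammer_succ, Nat.add_sub_cancel]
    ring

lemma qDescFactorial_zero (q : R) (n : ℕ) : qDescFactorial q n 0 = 1 := Finset.prod_range_zero _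

lemma qDescFactorial_succ (q : R) (n k : ℕ) :
    qDescFactorial q n (k + 1) = qDescFactorial q n k * ∑ l ∈ Finset.range (n - k), q ^ l :=
  Finset.prod_range_succ _ _

lemma qDescFactorial_of_lt (q : R) {n k : ℕ} (h : n < k) : qDescFactorial q n k = 0 :=
  Finset.prod_eq_zero (Finset.mem_range.2 h) (by simp)

lemma one_sub_pow_mul_qDescFactorial_self (q : R) (k : ℕ) :
    (1 - q) ^ k * qDescFactorial q k k = qPochhammer q q k := by
  calc (1 - q) ^ k * qDescFactorial q k k
      = ∏ i ∈ Finset.range k, (1 - q ^ (k - i)) := by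
        simp only [qDescFactorial, ← mul_neg_geom_sum, Finset.prod_mul_distrib, Finset.prod_const,
          Finset.card_range]
    _ = ∏ i ∈ Finset.range k, (1 - q ^ (i + 1)) := by
        rw [← Finset.prod_range_reflect]
        refine Finset.prod_congr rfl fun i hi => ?_
        have := Finset.mem_range.1 hi
        congr 2
        lia
    _ = qPochhammer q q k := by simp only [qPochhammer, pow_succ']

end CommRing

section Field

variable {K : Type*} [Field K]

/-- The backward q-derivative `D_q^-` as a linear endomorphism of the functions `K → K`; `DqM q` is
the case of real `q` and `K = ℂ`. At `0` division by zero makes it return `0` instead of `f'(0)`. -/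
def qDeriv (q : K) : Module.End K (K → K) where
  toFun f x := (f x - f (q * x)) / ((1 - q) * x)
  map_add' f g := by
    ext x
    simp only [Pi.add_apply]
    ring
  map_smul' r f := by
    ext x
    simp only [Pi.smul_apply, smul_eq_mul, RingHom.id_apply]
    ring

lemma qDeriv_apply (q : K) (f : K → K) (x : K) :
    qDeriv q f x = (f x - f (q * x)) / ((1 - q) * x) := rfl

lemma iterate_qDeriv_sum {ι : Type*} (q : K) (s : Finset ι) (co : ι → K) (f : ι → K → K) (k : ℕ)
    (x : K) :
    (qDeriv q)^[k] (fun x => ∑ j ∈ s, co j * f j x) x =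
      ∑ j ∈ s, co j * (qDeriv q)^[k] (f j) x := by
  have hsum : (fun x => ∑ j ∈ s, co j * f j x) = ∑ j ∈ s, co j • f j := by
    ext x
    simp only [Finset.sum_apply, Pi.smul_apply, smul_eq_mul]
  simp only [hsum, ← Module.End.pow_apply, map_sum, map_smul, Finset.sum_apply, Pi.smul_apply,
    smul_eq_mul]

lemma qDeriv_eqOn {q : K} (hq0 : q ≠ 0) {f g : K → K} (h : Set.EqOn f g {0}ᶜ) :
    Set.EqOn (qDeriv q f) (qDeriv q g) {0}ᶜ := fun x hx => by
  rw [qDeriv_apply, qDeriv_apply, h hx, h (mul_ne_zero hq0 hx)]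

lemma qDeriv_qPochhammer {q x : K} (hq1 : q ≠ 1) (hx : x ≠ 0) (b : K) (m : ℕ) :
    qDeriv q (fun x => qPochhammer q (b * x) m) x =
      -b * (∑ l ∈ Finset.range m, q ^ l) * qPochhammer q (b * q * x) (m - 1) := by
  have hq : 1 - q ≠ 0 := sub_ne_zero.2 hq1.symm
  rw [qDeriv_apply, mul_left_comm b q x, qPochhammer_sub_qPochhammer_mul, ← mul_neg_geom_sum,
    div_eq_iff (mul_ne_zero hq hx), show b * q * x = q * (b * x) by ring]
  ring

lemma iterate_qDeriv_qPochhammer {q : K} (hq0 : q ≠ 0) (hq1 : q ≠ 1) (b : K) (j k : ℕ) :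
    Set.EqOn ((qDeriv q)^[k] fun x => qPochhammer q (b * x) j)
      (((-b) ^ k * q ^ (k * (k - 1) / 2) * qDescFactorial q j k) •
        fun x => qPochhammer q (b * q ^ k * x) (j - k)) {0}ᶜ := by
  induction k with
  | zero => intro x _; simp [qDescFactorial_zero]
  | succ k ih =>
    intro x hx
    rw [Function.iterate_succ_apply', qDeriv_eqOn hq0 ih hx, map_smul, Pi.smul_apply,
      Pi.smul_apply, qDeriv_qPochhammer hq1 hx, qDescFactorial_succ, Nat.triangle_succ,
      Nat.sub_sub, pow_succ q k, ← mul_assoc b]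
    simp only [smul_eq_mul]
    ring

lemma iterate_qDeriv_qPochhammer_of_mul_eq_one {q b x : K} {k : ℕ} (hq0 : q ≠ 0) (hq1 : q ≠ 1)
    (hx : b * q ^ k * x = 1) (j : ℕ) :
    (qDeriv q)^[k] (fun x => qPochhammer q (b * x) j) x =
      if j = k then (-b) ^ k * q ^ (k * (k - 1) / 2) * (qPochhammer q q k / (1 - q) ^ k)
      else 0 := by
  have hx0 : x ≠ 0 := right_ne_zero_of_mul_eq_one hx
  rw [iterate_qDeriv_qPochhammer hq0 hq1 b j k hx0, Pi.smul_apply, smul_eq_mul, hx]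
  rcases lt_trichotomy j k with hjk | rfl | hkj
  · rw [qDescFactorial_of_lt q hjk, if_neg hjk.ne, mul_zero, zero_mul]
  · have hq : (1 - q) ^ j ≠ 0 := pow_ne_zero j (sub_ne_zero.2 hq1.symm)
    rw [if_pos rfl, Nat.sub_self, qPochhammer_zero, mul_one,
      ← one_sub_pow_mul_qDescFactorial_self, mul_div_cancel_left₀ _ hq]
  · rw [qPochhammer_one_of_pos q (Nat.sub_pos_of_lt hkj), if_neg hkj.ne', mul_zero]

theorem stmt16_general {q a c : K} (hq0 : q ≠ 0) (hq1 : q ≠ 1) (ha : a ≠ 0) (hc : c ≠ 0)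
    (n : ℕ) (co : ℕ → K) {k : ℕ} (hk : k ≤ n) :
    (qDeriv q)^[k]
        (fun x => ∑ j ∈ Finset.range (n + 1), co j * qPochhammer q (q * a * x / c) j)
        (c / (q ^ (k + 1) * a)) =
      co k * (-1) ^ k * (q * a / c) ^ k * q ^ (k * (k - 1) / 2) *
        qPochhammer q q k / (1 - q) ^ k := by
  have hpoint : q * a / c * q ^ k * (c / (q ^ (k + 1) * a)) = 1 := by
    field_simp
    rw [pow_succ']
  simp only [mul_div_right_comm (q * a) _ c]
  simp only [iterate_qDeriv_sum q _ co fun j x => qPochhammer q (q * a / c * x) j,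
    iterate_qDeriv_qPochhammer_of_mul_eq_one hq0 hq1 hpoint, mul_ite, mul_zero,
    Finset.sum_ite_eq', Finset.mem_range, Nat.lt_succ_of_le hk, if_true]
  rw [neg_pow]
  ring

end Field

/-- q-Taylor coefficients: if `f(x) = Σ_{k=0}^n c_k (qax/c;q)_k` then for `0 ≤ k ≤ n`
`((D_q^-)^k f)(c/(q^{k+1}a)) = c_k (-1)^k (qa/c)^k q^{k(k-1)/2} (q;q)_k/(1-q)^k`. -/
theorem stmt16 (q : ℝ) (hq0 : 0 < q) (hq1 : q < 1) (a c : ℂ)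
    (ha : a ≠ 0) (hc : c ≠ 0) (n : ℕ) (co : ℕ → ℂ) :
    ∀ k : ℕ, k ≤ n →
      (DqM q)^[k]
          (fun x : ℂ => ∑ j ∈ Finset.range (n + 1), co j * qp (q : ℂ) ((q : ℂ) * a * x / c) j)
          (c / ((q : ℂ) ^ (k + 1) * a)) =
        co k * (-1) ^ k * ((q : ℂ) * a / c) ^ k * (q : ℂ) ^ (k * (k - 1) / 2) *
          qp (q : ℂ) (q : ℂ) k / (1 - (q : ℂ)) ^ k := by
  intro k hk
  exact stmt16_general (q := (q : ℂ)) (mod_cast hq0.ne') (mod_cast hq1.ne) ha hc n co hk
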